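/- Let n ≥ 1 and suppose the Kasteleyn matrix K_n, regarded as a matrix over ℚ, is invertible. Then for every integer 0 ≤ j ≤ 2n−1, K_n⁻¹((j,j+1),(0,0)) = K_n⁻¹((j,j+1), b_n); equivalently, −K_n⁻¹((0,0),(j,j+1)) = K_n⁻¹((j,j+1), b_n). -/

import Mathlib

open Finset

/-- Membership predicate for the vertex set `V_n` of the TSSCPP graph `G_n`:
`0 ≤ x₁ ≤ 2n`, `x₁ ≤ x₂ ≤ 2n+1`, with `(2n,2n+1)` removed when `n` is odd. -/
def memV (n : ℕ) (x : ℤ × ℤ) : Prop :=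
  0 ≤ x.1 ∧ x.1 ≤ 2*(n:ℤ) ∧ x.1 ≤ x.2 ∧ x.2 ≤ 2*(n:ℤ)+1 ∧
    ¬(n % 2 = 1 ∧ x.1 = 2*(n:ℤ) ∧ x.2 = 2*(n:ℤ)+1)

instance memV.decPred (n : ℕ) : DecidablePred (memV n) := fun x => by
  unfold memV; infer_instance

/-- The vertex set `V_n` as a finite set. -/
noncomputable def Vfin (n : ℕ) : Finset (ℤ × ℤ) :=
  (Finset.Icc (0:ℤ) (2*(n:ℤ)) ×ˢ Finset.Icc (0:ℤ) (2*(n:ℤ)+1)).filter (memV n)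

/-- The vertex set `V_n` as a set. -/
def Vset (n : ℕ) : Set (ℤ × ℤ) := {x | memV n x}

/-- The distinguished vertex `b_n = (2n, 2n+1-(n mod 2))`. -/
def bvertex (n : ℕ) : ℤ × ℤ := (2*(n:ℤ), 2*(n:ℤ)+1 - ((n % 2 : ℕ) : ℤ))

/-- Edge relation (with `x` the "lower-left" endpoint) of the TSSCPP graph `G_n`:
horizontal edges `((x₁,x₂),(x₁+1,x₂))` for `0 ≤ x₁ ≤ 2n−1`, `x₁ ≤ x₂ ≤ 2n+1`, `x₁+x₂` odd;
vertical edges `((x₁,x₂),(x₁,x₂+1))` for `0 ≤ x₁ ≤ 2n` (`2n−1` when `n` odd), `x₁ ≤ x₂ ≤ 2n`;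
diagonal edges `((x₁,x₁),(x₁+1,x₁+1))` for `0 ≤ x₁ ≤ 2n−1`. -/
def edgeRel (n : ℕ) (x y : ℤ × ℤ) : Prop :=
  (y.1 = x.1 + 1 ∧ y.2 = x.2 ∧ 0 ≤ x.1 ∧ x.1 ≤ 2*(n:ℤ) - 1 ∧ x.1 ≤ x.2 ∧
      x.2 ≤ 2*(n:ℤ)+1 ∧ Odd (x.1 + x.2)) ∨
  (y.1 = x.1 ∧ y.2 = x.2 + 1 ∧ 0 ≤ x.1 ∧ x.1 ≤ 2*(n:ℤ) - ((n % 2 : ℕ) : ℤ) ∧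
      x.1 ≤ x.2 ∧ x.2 ≤ 2*(n:ℤ)) ∨
  (x.1 = x.2 ∧ y.1 = x.1 + 1 ∧ y.2 = x.2 + 1 ∧ 0 ≤ x.1 ∧ x.1 ≤ 2*(n:ℤ) - 1)

/-- The TSSCPP graph `G_n` (as a graph on all of `ℤ × ℤ`; all of its edges join
vertices of `V_n`). -/
def Gph (n : ℕ) : SimpleGraph (ℤ × ℤ) where
  Adj x y := edgeRel n x y ∨ edgeRel n y x
  symm := ⟨fun x y h => Or.symm h⟩
  loopless := by
    constructor
    rintro ⟨x1, x2⟩ (h | h) <;>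
      rcases h with ⟨h1, h2, -⟩ | ⟨h1, h2, -⟩ | ⟨h0, h1, h2, -⟩ <;> omega

/-- `Zpm n U` = number of perfect matchings of the subgraph of `G_n` induced on `V_n \ U`. -/
noncomputable def Zpm (n : ℕ) (U : Set (ℤ × ℤ)) : ℕ :=
  Nat.card {M : ((Gph n).induce (Vset n \ U)).Subgraph // M.IsPerfectMatching}

/-- The entry function `k(x,y)` of the Kasteleyn matrix. -/
def kfun (x y : ℤ × ℤ) : ℚ :=
  if ((x.1 + x.2) % 2 = 0 ∧ x.2 = y.2 ∧ x.1 - y.1 = 1) ∨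
     ((x.1 + x.2) % 2 = 0 ∧ x.1 = y.1 ∧ (y.2 - x.2 = 1 ∨ x.2 - y.2 = 1)) ∨
     (x.1 = x.2 ∧ y.1 = y.2 ∧ y.1 = x.1 - 1)
  then 1 else 0

/-- The Kasteleyn matrix `K_n` of `G_n` over `ℚ`, rows and columns indexed by `V_n`. -/
def Kmat (n : ℕ) : Matrix ↥(Vfin n) ↥(Vfin n) ℚ :=
  fun x y => kfun x.val y.val - kfun y.val x.val

/-!
Let `u` be the vector with `u (i, i) = (-1)^i`, with `u (2n, 2n+1) = 1` when that vertex exists, and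
zero elsewhere. In the row of a diagonal vertex the two diagonal neighbours enter `K_n u` with
opposite coefficients and equal signs of `u`; in the row of `(i, i+1)` the neighbours `(i, i)` and
`(i+1, i+1)` enter with equal coefficients and opposite signs. So everything cancels except `+1` in
row `(0, 0)` and `-1` in rows `(2n, 2n)` and `(2n, 2n+1)`. The latter row exists only for even `n`,
and then the entry `u (2n, 2n+1)` cancels the `-1` in row `(2n, 2n)`. In both parities
`K_n u = δ_{(0,0)} - δ_{b_n}`, whence `K_n⁻¹(x, (0,0)) - K_n⁻¹(x, b_n) = u x`, which vanishes at
`(j, j+1)` for `j < 2n`. The second form holds because `K_n⁻¹` is antisymmetric.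
-/

section Matrix

variable {ι R : Type*} [Fintype ι] [DecidableEq ι] [CommRing R]

theorem nonsing_inv_neg (A : Matrix ι ι R) : (-A)⁻¹ = -A⁻¹ := by
  have hone : (-1 : Matrix ι ι R)⁻¹ = -1 :=
    Matrix.inv_eq_left_inv (by rw [neg_mul_neg, one_mul])
  rw [← mul_neg_one, Matrix.mul_inv_rev, hone, neg_one_mul]

theorem nonsing_inv_apply_of_transpose_eq_neg {A : Matrix ι ι R} (hA : A.transpose = -A)
    (i j : ι) : A⁻¹ i j = -A⁻¹ j i := by
  rw [← Matrix.neg_apply, ← nonsing_inv_neg, ← hA, ← Matrix.transpose_nonsing_inv,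
    Matrix.transpose_apply]

theorem nonsing_inv_apply_sub_of_mulVec_eq {A : Matrix ι ι R} (hA : IsUnit A.det) {u : ι → R}
    {p q : ι} (hu : A.mulVec u = Pi.single p 1 - Pi.single q 1) (i : ι) :
    A⁻¹ i p - A⁻¹ i q = u i := by
  let := A.invertibleOfIsUnitDet hA
  have hinv := Matrix.inv_mulVec_eq_vec hu.symm
  rw [Matrix.mulVec_sub, Matrix.mulVec_single_one, Matrix.mulVec_single_one] at hinv
  exact congrFun hinv i

end Matrix

theorem mem_Vfin {n : ℕ} {x : ℤ × ℤ} : x ∈ Vfin n ↔ memV n x := by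
  simp only [Vfin, mem_filter, mem_product, mem_Icc, and_iff_right_iff_imp]
  unfold memV
  omega

theorem origin_mem_Vfin (n : ℕ) : ((0 : ℤ), (0 : ℤ)) ∈ Vfin n := by
  grind [mem_Vfin, memV]

/-- The vertex `(2n, 2n+1)`, present in `G_n` only when `n` is even. -/
def corner (n : ℕ) : ℤ × ℤ := (2 * n, 2 * n + 1)

theorem corner_mem_Vfin_iff {n : ℕ} : corner n ∈ Vfin n ↔ Even n := by
  grind [mem_Vfin, memV, corner]

theorem bvertex_of_even {n : ℕ} (hn : Even n) : bvertex n = corner n := by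
  simp [bvertex, corner, Nat.even_iff.1 hn]

theorem bvertex_of_odd {n : ℕ} (hn : Odd n) : bvertex n = (2 * (n : ℤ), 2 * (n : ℤ)) := by
  simp [bvertex, Nat.odd_iff.1 hn]

theorem bvertex_mem_Vfin (n : ℕ) : bvertex n ∈ Vfin n := by
  rcases n.even_or_odd with hn | hn
  · rw [bvertex_of_even hn]
    exact corner_mem_Vfin_iff.2 hn
  · simp only [bvertex_of_odd hn, mem_Vfin, memV]
    omega

theorem Vfin_filter_fst_eq_snd (n : ℕ) :
    {y ∈ Vfin n | y.1 = y.2} = (Icc (0 : ℤ) (2 * n)).diag := by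
  ext y
  simp only [mem_filter, mem_Vfin, memV, mem_diag, mem_Icc]
  omega

/-- The Kasteleyn matrix of the infinite lattice, of which each `Kmat n` is a submatrix. -/
def kasteleyn (x y : ℤ × ℤ) : ℚ := kfun x y - kfun y x

theorem kasteleyn_diag_diag (a i : ℤ) :
    kasteleyn (a, a) (i, i) = (if i = a - 1 then 1 else 0) - (if i = a + 1 then 1 else 0) := by
  grind [kasteleyn, kfun]

theorem kasteleyn_superdiag_diag (a i : ℤ) :
    kasteleyn (a, a + 1) (i, i) = -(if i = a then 1 else 0) - (if i = a + 1 then 1 else 0) := by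
  grind [kasteleyn, kfun]

theorem kasteleyn_diag_of_add_two_le {a b : ℤ} (hab : a + 2 ≤ b) (i : ℤ) :
    kasteleyn (a, b) (i, i) = 0 := by
  grind [kasteleyn, kfun]

theorem kasteleyn_corner {n : ℕ} {x : ℤ × ℤ} (hx : x ∈ Vfin n) :
    kasteleyn x (corner n) = if x = (2 * (n : ℤ), 2 * (n : ℤ)) then 1 else 0 := by
  grind [mem_Vfin, memV, corner, kasteleyn, kfun]

theorem sum_kasteleyn_diag_mul_alternating {m a : ℤ} (ha : a ∈ Icc 0 m) :
    ∑ i ∈ Icc 0 m, kasteleyn (a, a) (i, i) * (-1) ^ i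
      = (if a = 0 then 1 else 0) - (if a = m then (-1) ^ m else 0) := by
  have hneighbours : ∑ i ∈ Icc 0 m, kasteleyn (a, a) (i, i) * (-1) ^ i
      = (if a - 1 ∈ Icc 0 m then (-1) ^ (a - 1) else 0)
        - (if a + 1 ∈ Icc 0 m then (-1) ^ (a + 1) else 0) := by
    simp only [kasteleyn_diag_diag, sub_mul, ite_mul, one_mul, zero_mul, sum_sub_distrib,
      sum_ite_eq']
  have hne : (-1 : ℚ) ≠ 0 := by norm_num
  rw [hneighbours, zpow_sub_one₀ hne, zpow_add_one₀ hne]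
  have hstart : a = 0 → (-1 : ℚ) ^ a = 1 := fun ha0 => by rw [ha0, zpow_zero]
  grind

theorem sum_kasteleyn_superdiag_mul_alternating {m a : ℤ} (ha : a ∈ Icc 0 m) :
    ∑ i ∈ Icc 0 m, kasteleyn (a, a + 1) (i, i) * (-1) ^ i
      = -(if a = m then (-1) ^ m else 0) := by
  have hneighbours : ∑ i ∈ Icc 0 m, kasteleyn (a, a + 1) (i, i) * (-1) ^ i
      = -(-1) ^ a - (if a + 1 ∈ Icc 0 m then (-1) ^ (a + 1) else 0) := by
    simp only [kasteleyn_superdiag_diag, sub_mul, neg_mul, ite_mul, one_mul, zero_mul,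
      sum_sub_distrib, sum_neg_distrib, sum_ite_eq', if_pos ha]
  have hne : (-1 : ℚ) ≠ 0 := by norm_num
  rw [hneighbours, zpow_add_one₀ hne]
  grind

/-- The alternating signs `(-1)^i` at the diagonal vertices `(i, i)`, extended by zero. -/
def diagSign (y : ℤ × ℤ) : ℚ := if y.1 = y.2 then (-1) ^ y.1 else 0

/-- The solution `u` of `K_n u = δ_{(0,0)} - δ_{b_n}`, defined on all of `ℤ × ℤ`; for odd `n` the
term at `corner n` lies outside `V_n`. -/
def potential (n : ℕ) (y : ℤ × ℤ) : ℚ := diagSign y + if y = corner n then 1 else 0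

theorem sum_kasteleyn_mul_diagSign {n : ℕ} {x : ℤ × ℤ} (hx : x ∈ Vfin n) :
    ∑ y ∈ Vfin n, kasteleyn x y * diagSign y
      = (if x = (0, 0) then 1 else 0) - (if x = (2 * (n : ℤ), 2 * (n : ℤ)) then 1 else 0)
        - (if x = corner n then 1 else 0) := by
  obtain ⟨a, b⟩ := x
  simp only [mem_Vfin, memV] at hx
  have ha : a ∈ Icc (0 : ℤ) (2 * n) := mem_Icc.2 ⟨hx.1, hx.2.1⟩
  have hsign : (-1 : ℚ) ^ (2 * (n : ℤ)) = 1 := (even_two_mul _).neg_one_zpow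
  simp only [diagSign, mul_ite, mul_zero]
  rw [← sum_filter, Vfin_filter_fst_eq_snd, sum_diag]
  simp only [Prod.mk.injEq, corner]
  obtain rfl | rfl | hab : b = a ∨ b = a + 1 ∨ a + 2 ≤ b := by omega
  · rw [sum_kasteleyn_diag_mul_alternating ha, hsign]
    grind
  · rw [sum_kasteleyn_superdiag_mul_alternating ha, hsign]
    grind
  · simp only [kasteleyn_diag_of_add_two_le hab, zero_mul, sum_const_zero]
    grind

theorem sum_kasteleyn_mul_potential {n : ℕ} {x : ℤ × ℤ} (hx : x ∈ Vfin n) :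
    ∑ y ∈ Vfin n, kasteleyn x y * potential n y
      = (if x = (0, 0) then 1 else 0) - (if x = bvertex n then 1 else 0) := by
  simp only [potential, mul_add, sum_add_distrib, sum_kasteleyn_mul_diagSign hx, mul_ite, mul_one,
    mul_zero, sum_ite_eq', kasteleyn_corner hx]
  rcases n.even_or_odd with hn | hn
  · rw [bvertex_of_even hn, if_pos (corner_mem_Vfin_iff.2 hn)]
    ring
  · have hcorner : corner n ∉ Vfin n := by rwa [corner_mem_Vfin_iff, Nat.not_even_iff_odd]
    rw [bvertex_of_odd hn, if_neg hcorner, if_neg (ne_of_mem_of_not_mem hx hcorner)]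
    ring

theorem Kmat_mulVec_potential (n : ℕ) :
    (Kmat n).mulVec (fun y => potential n y)
      = Pi.single ⟨(0, 0), origin_mem_Vfin n⟩ 1 - Pi.single ⟨bvertex n, bvertex_mem_Vfin n⟩ 1 := by
  ext x
  have hsum := sum_kasteleyn_mul_potential x.2
  rw [← sum_coe_sort] at hsum
  simpa only [Pi.sub_apply, Pi.single_apply, Subtype.ext_iff, Matrix.mulVec, dotProduct, Kmat,
    kasteleyn] using hsum

theorem Kmat_transpose (n : ℕ) : (Kmat n).transpose = -Kmat n := by
  ext x y
  exact (neg_sub _ _).symm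

theorem Kinv_first_column_general (n : ℕ) (hdet : IsUnit (Kmat n).det) (x : Vfin n)
    (hdiag : x.1.1 ≠ x.1.2) (hcorner : x.1 ≠ corner n) :
    (Kmat n)⁻¹ x ⟨(0, 0), origin_mem_Vfin n⟩
        = (Kmat n)⁻¹ x ⟨bvertex n, bvertex_mem_Vfin n⟩ ∧
      -(Kmat n)⁻¹ ⟨(0, 0), origin_mem_Vfin n⟩ x
        = (Kmat n)⁻¹ x ⟨bvertex n, bvertex_mem_Vfin n⟩ := by
  have hpot : potential n x = 0 := by
    rw [potential, diagSign, if_neg hdiag, if_neg hcorner, add_zero]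
  have hsub := nonsing_inv_apply_sub_of_mulVec_eq hdet (Kmat_mulVec_potential n) x
  rw [← nonsing_inv_apply_of_transpose_eq_neg (Kmat_transpose n), and_self]
  exact sub_eq_zero.1 (hsub.trans hpot)

/-- For `n ≥ 1` with `K_n` invertible over `ℚ`, and `0 ≤ j ≤ 2n−1`:
`K_n⁻¹((j,j+1),(0,0)) = K_n⁻¹((j,j+1), b_n)`; equivalently,
`−K_n⁻¹((0,0),(j,j+1)) = K_n⁻¹((j,j+1), b_n)`. -/
theorem Kinv_first_column (n : ℕ) (hn : 1 ≤ n) (hdet : IsUnit (Kmat n).det)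
    (j : ℕ) (hj : j ≤ 2*n - 1)
    (hx : (((j:ℤ), (j:ℤ)+1)) ∈ Vfin n) (h0 : ((0:ℤ), (0:ℤ)) ∈ Vfin n)
    (hb : bvertex n ∈ Vfin n) :
    (Kmat n)⁻¹ ⟨((j:ℤ), (j:ℤ)+1), hx⟩ ⟨((0:ℤ), (0:ℤ)), h0⟩
        = (Kmat n)⁻¹ ⟨((j:ℤ), (j:ℤ)+1), hx⟩ ⟨bvertex n, hb⟩ ∧
      -(Kmat n)⁻¹ ⟨((0:ℤ), (0:ℤ)), h0⟩ ⟨((j:ℤ), (j:ℤ)+1), hx⟩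
        = (Kmat n)⁻¹ ⟨((j:ℤ), (j:ℤ)+1), hx⟩ ⟨bvertex n, hb⟩ := by
  have hcorner : ((j : ℤ), (j : ℤ) + 1) ≠ corner n := by grind [corner]
  exact Kinv_first_column_general n hdet ⟨_, hx⟩ (lt_add_one _).ne hcorner
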